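/- arXiv:math/0605712 — 3 statements merged into one kernel-verified Lean document; each statement's English description precedes it below -/
import Mathlib

section
/- Let R be a ring such that every injective left R-module has projective dimension at most 1. Then every left R-module of finite injective dimension has projective dimension at most 1. (This is the dual half of the assertion that over a Gorenstein ring of Gorenstein dimension at most 1 every module of finite injective dimension satisfies both proj-dim ≤ 1 and inj-dim ≤ 1.) -/
open CategoryTheory

universe u

/-- The `n`-th Ext group `Ext^n_R(X, Y)` of two `R`-modules, computed in the abelian
category of (left) `R`-modules. -/
noncomputable abbrev ExtGroup (R : Type u) [Ring R] (X Y : ModuleCat.{u} R) (n : ℕ) :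
    ModuleCat ℤ :=
  ((Ext ℤ (ModuleCat.{u} R) n).obj (Opposite.op X)).obj Y

/-- A module `M` has projective dimension at most `n` if `Ext^i_R(M, N) = 0`
for every module `N` and every `i > n`. -/
def ProjDimLE (R : Type u) [Ring R] (n : ℕ) (M : ModuleCat.{u} R) : Prop :=
  ∀ (N : ModuleCat.{u} R) (i : ℕ), n < i → Subsingleton (ExtGroup R M N i)

/-- A module `M` has injective dimension at most `n` if `Ext^i_R(N, M) = 0`
for every module `N` and every `i > n`. -/
def InjDimLE (R : Type u) [Ring R] (n : ℕ) (M : ModuleCat.{u} R) : Prop :=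
  ∀ (N : ModuleCat.{u} R) (i : ℕ), n < i → Subsingleton (ExtGroup R N M i)

/-!
Embed a non-injective `M` into an injective `I`, with cokernel `N`. The injective dimension of `N`
is one less than that of `M`, so if injectives have projective dimension at most `n`, then so has
`N` by induction. In the long exact sequence `Ext^i(M, -)` sits between `Ext^i(I, -)` and
`Ext^(i+1)(N, -)`, so it vanishes for `i > n`.

`ExtGroup` is a left derived functor, whereas Mathlib's dimension theory uses `Abelian.Ext`, defined
in the derived category. In positive degrees, either one vanishes iff, for a projective resolution
`P` of the first argument, every cocycle of `Hom(P, Y)` is a coboundary.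
-/

universe w

section ExtComparison

variable {C : Type*} [Category* C] [Abelian C]

lemma exactAt_linearYonedaObj_succ_iff (S : Type*) [Ring S] [Linear S C]
    (K : ChainComplex C ℕ) (Y : C) (n : ℕ) :
    (K.linearYonedaObj S Y).ExactAt (n + 1) ↔
      ∀ f : K.X (n + 1) ⟶ Y, K.d (n + 2) (n + 1) ≫ f = 0 →
        ∃ g : K.X n ⟶ Y, K.d (n + 1) n ≫ g = f := by
  rw [HomologicalComplex.exactAt_iff' _ n (n + 1) (n + 2) (by simp) (by simp),
    ShortComplex.moduleCat_exact_iff]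
  exact Iff.rfl

lemma subsingleton_abelianExt_succ_iff [HasExt.{w} C] {X : C} (P : ProjectiveResolution X)
    (Y : C) (n : ℕ) :
    Subsingleton (Abelian.Ext.{w} X Y (n + 1)) ↔
      ∀ f : P.complex.X (n + 1) ⟶ Y, P.complex.d (n + 2) (n + 1) ≫ f = 0 →
        ∃ g : P.complex.X n ⟶ Y, P.complex.d (n + 1) n ≫ g = f := by
  constructor
  · intro _ f hf
    exact (P.extMk_eq_zero_iff f (n + 2) rfl hf n rfl).1 (Subsingleton.elim _ _)
  · intro exists_primitive
    refine subsingleton_of_forall_eq 0 fun e ↦ ?_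
    obtain ⟨f, hf, rfl⟩ := P.extMk_surjective e (n + 2) rfl
    exact (P.extMk_eq_zero_iff f (n + 2) rfl hf n rfl).2 (exists_primitive f hf)

lemma subsingleton_ext_iff_subsingleton_abelianExt (S : Type*) [Ring S] [Linear S C]
    [EnoughProjectives C] [HasExt.{w} C] (X Y : C) {n : ℕ} (hn : n ≠ 0) :
    Subsingleton (((Ext S C n).obj (Opposite.op X)).obj Y) ↔
      Subsingleton (Abelian.Ext.{w} X Y n) := by
  obtain ⟨n, rfl⟩ := Nat.exists_eq_succ_of_ne_zero hn
  let P := projectiveResolution X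
  rw [← ModuleCat.isZero_iff_subsingleton, (P.isoExt (n + 1) Y).isZero_iff,
    ← HomologicalComplex.exactAt_iff_isZero_homology, exactAt_linearYonedaObj_succ_iff,
    subsingleton_abelianExt_succ_iff P]

end ExtComparison

lemma hasProjectiveDimensionLT_of_hasInjectiveDimensionLE {C : Type*} [Category* C] [Abelian C]
    [EnoughInjectives C] {n : ℕ} (hinj : ∀ I : C, Injective I → HasProjectiveDimensionLT I n)
    {m : ℕ} (M : C) (hM : HasInjectiveDimensionLE M m) : HasProjectiveDimensionLT M n := by
  induction m generalizing M with
  | zero => exact hinj M (injective_iff_hasInjectiveDimensionLT_one.2 hM)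
  | succ m ih =>
    let S := ShortComplex.mk (Injective.ι M) _ (Limits.cokernel.condition _)
    have hS : S.ShortExact := { exact := ShortComplex.exact_cokernel _ }
    have injective_middle : Injective S.X₂ := inferInstanceAs (Injective (Injective.under M))
    have injDim_cokernel : HasInjectiveDimensionLE S.X₃ m :=
      (hS.hasInjectiveDimensionLT_X₃_iff m injective_middle).2 hM
    have projDim_cokernel : HasProjectiveDimensionLT S.X₃ n := ih S.X₃ injDim_cokernel
    exact hS.hasProjectiveDimensionLT_X₁ n (hinj S.X₂ injective_middle)
      (hasProjectiveDimensionLT_of_ge S.X₃ n (n + 1) n.le_succ)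

section Modules

variable {R : Type u} [Ring R] {n : ℕ} {M : ModuleCat.{u} R}

lemma projDimLE_iff_hasProjectiveDimensionLE : ProjDimLE R n M ↔ HasProjectiveDimensionLE M n := by
  constructor
  · refine fun h ↦ .mk fun i hi N e ↦ ?_
    have := (subsingleton_ext_iff_subsingleton_abelianExt ℤ M N (by lia)).1 (h N i hi)
    exact Subsingleton.elim e 0
  · exact fun _ N i hi ↦ (subsingleton_ext_iff_subsingleton_abelianExt ℤ M N (by lia)).2
      (HasProjectiveDimensionLT.subsingleton M (n + 1) i hi N)

lemma injDimLE_iff_hasInjectiveDimensionLE : InjDimLE R n M ↔ HasInjectiveDimensionLE M n := by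
  constructor
  · refine fun h ↦ .mk fun i hi N e ↦ ?_
    have := (subsingleton_ext_iff_subsingleton_abelianExt ℤ N M (by lia)).1 (h N i hi)
    exact Subsingleton.elim e 0
  · exact fun _ N i hi ↦ (subsingleton_ext_iff_subsingleton_abelianExt ℤ N M (by lia)).2
      (HasInjectiveDimensionLT.subsingleton M (n + 1) i hi N)

end Modules

theorem projDimLEOne_of_finite_injDim_general (R : Type u) [Ring R] (n : ℕ)
    (hinj : ∀ I : ModuleCat.{u} R, Injective I → ProjDimLE R n I)
    (M : ModuleCat.{u} R) (hM : ∃ m : ℕ, InjDimLE R m M) :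
    ProjDimLE R n M := by
  obtain ⟨m, hm⟩ := hM
  simp only [projDimLE_iff_hasProjectiveDimensionLE] at hinj ⊢
  rw [injDimLE_iff_hasInjectiveDimensionLE] at hm
  exact hasProjectiveDimensionLT_of_hasInjectiveDimensionLE hinj M hm

/-- If every injective left `R`-module has projective dimension at most 1, then every
left `R`-module of finite injective dimension has projective dimension at most 1. -/
theorem projDimLEOne_of_finite_injDim (R : Type u) [Ring R]
    (hinj : ∀ I : ModuleCat.{u} R, Injective I → ProjDimLE R 1 I)
    (M : ModuleCat.{u} R) (hM : ∃ m : ℕ, InjDimLE R m M) :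
    ProjDimLE R 1 M :=
  projDimLEOne_of_finite_injDim_general R 1 hinj M hM
end

section
/- Let R be a ring such that every projective left R-module has injective dimension at most 1 and every injective left R-module has projective dimension at most 1, let J be the Jacobson radical of R, and let P be a projective left R-module. Then either the submodule J•P is projective, or the quotient module P/J•P has infinite projective dimension and infinite injective dimension (i.e., P/J•P has neither finite projective nor finite injective dimension). -/
open CategoryTheory

universe u

/-- The submodule `J • P` of a module `P`, where `J` is the Jacobson radical of `R`
(the intersection of the maximal left ideals): the submodule generated by the
elements `j • p` with `j ∈ J`, `p ∈ P`. -/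
def radSMul (R : Type u) [Ring R] (P : Type u) [AddCommGroup P] [Module R P] :
    Submodule R P :=
  Submodule.span R {x : P | ∃ j ∈ (⊥ : Ideal R).jacobson, ∃ p : P, j • p = x}

/-!
If projective modules have injective dimension at most `d` and injective modules have projective
dimension at most `d`, then finite projective dimension and finite injective dimension each force
projective dimension at most `d`. For the former, if `X` has projective dimension `m > d`, then
`Ext^m(X, -)` is right exact, so an epimorphism `Q ⟶ Y` from a projective makes `Ext^m(X, Y)` a
quotient of `Ext^m(X, Q) = 0`, a contradiction. For the latter, descend along an injective
coresolution of `X`. So if `P ⧸ K` has finite projective or injective dimension, its syzygy `K` has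
projective dimension at most `d - 1`.
-/

section Abelian

open Limits Abelian

variable {C : Type*} [Category* C] [Abelian C]

lemma isZero_Ext_succ_iff_subsingleton (k : Type*) [Ring k] [Linear k C] [EnoughProjectives C]
    [HasExt C] (X Y : C) (n : ℕ) :
    IsZero (((_root_.Ext k C (n + 1)).obj (Opposite.op X)).obj Y) ↔
      Subsingleton (Abelian.Ext X Y (n + 1)) := by
  let Q : ProjectiveResolution X := ProjectiveResolution.of X
  have cocycle_iff : IsZero (((_root_.Ext k C (n + 1)).obj (Opposite.op X)).obj Y) ↔
      ∀ f : Q.complex.X (n + 1) ⟶ Y, Q.complex.d (n + 2) (n + 1) ≫ f = 0 →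
        ∃ g : Q.complex.X n ⟶ Y, Q.complex.d (n + 1) n ≫ g = f := by
    rw [(Q.isoExt (n + 1) Y).isZero_iff, ← HomologicalComplex.exactAt_iff_isZero_homology,
      HomologicalComplex.exactAt_iff' _ n (n + 1) (n + 2) (by simp) (by simp),
      ShortComplex.moduleCat_exact_iff]
    rfl
  rw [cocycle_iff]
  constructor
  · refine fun h ↦ subsingleton_of_forall_eq 0 fun e ↦ ?_
    obtain ⟨f, hf, rfl⟩ := Q.extMk_surjective e (n + 2) rfl
    exact (Q.extMk_eq_zero_iff f (n + 2) rfl hf n rfl).mpr (h f hf)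
  · exact fun _ f hf ↦ (Q.extMk_eq_zero_iff f (n + 2) rfl hf n rfl).mp (Subsingleton.elim _ _)

variable {d : ℕ} {X : C}

lemma hasProjectiveDimensionLT_of_succ [EnoughProjectives C]
    (hproj : ∀ Q : C, Projective Q → HasInjectiveDimensionLT Q d) {n : ℕ} (hdn : d ≤ n)
    [HasProjectiveDimensionLT X (n + 1)] : HasProjectiveDimensionLT X n := by
  let := HasExt.standard C
  refine HasProjectiveDimensionLT.mk fun i hi Y e ↦ ?_
  have presentation : (ShortComplex.mk (kernel.ι (Projective.π Y)) (Projective.π Y)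
      (kernel.condition _)).ShortExact :=
    { exact := ShortComplex.exact_kernel _ }
  have obstruction : e.comp presentation.extClass rfl = 0 :=
    Ext.eq_zero_of_hasProjectiveDimensionLT _ (n + 1) (by lia)
  obtain ⟨lift, rfl⟩ := Ext.covariant_sequence_exact₃ _ presentation e rfl obstruction
  have := hproj (Projective.over Y) inferInstance
  rw [lift.eq_zero_of_hasInjectiveDimensionLT d (hdn.trans hi), Ext.zero_comp]

lemma hasProjectiveDimensionLT_of_forall_projective [EnoughProjectives C]
    (hproj : ∀ Q : C, Projective Q → HasInjectiveDimensionLT Q d) {n : ℕ}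
    (hX : HasProjectiveDimensionLT X n) : HasProjectiveDimensionLT X d := by
  have descend (k : ℕ) (hk : HasProjectiveDimensionLT X (d + k)) :
      HasProjectiveDimensionLT X d := by
    induction k with
    | zero => exact hk
    | succ k ih => exact ih (hasProjectiveDimensionLT_of_succ hproj (Nat.le_add_right d k))
  exact descend n inferInstance

lemma hasProjectiveDimensionLT_of_forall_injective [EnoughInjectives C]
    (hinj : ∀ I : C, Injective I → HasProjectiveDimensionLT I d) {n : ℕ}
    (hX : HasInjectiveDimensionLE X n) : HasProjectiveDimensionLT X d := by
  induction n generalizing X with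
  | zero => exact hinj X (injective_iff_hasInjectiveDimensionLT_one.mpr hX)
  | succ n ih =>
    have coresolution : (ShortComplex.mk (Injective.ι X) (cokernel.π (Injective.ι X))
        (cokernel.condition _)).ShortExact :=
      { exact := ShortComplex.exact_cokernel _ }
    have hcoker : HasProjectiveDimensionLT (cokernel (Injective.ι X)) d :=
      ih ((coresolution.hasInjectiveDimensionLT_X₃_iff n inferInstance).mpr hX)
    exact coresolution.hasProjectiveDimensionLT_X₁ d (hinj _ inferInstance)
      (hasProjectiveDimensionLT_of_ge _ d (d + 1) (Nat.le_succ d))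

end Abelian

section Module

variable {R : Type u} [Ring R] {n : ℕ}

lemma subsingleton_extGroup_succ_iff (X Y : ModuleCat.{u} R) (n : ℕ) :
    Subsingleton (ExtGroup R X Y (n + 1)) ↔ Subsingleton (Abelian.Ext X Y (n + 1)) := by
  rw [← ModuleCat.isZero_iff_subsingleton, isZero_Ext_succ_iff_subsingleton]

lemma projDimLE_iff {M : ModuleCat.{u} R} : ProjDimLE R n M ↔ HasProjectiveDimensionLE M n := by
  constructor
  · refine fun h ↦ HasProjectiveDimensionLT.mk fun i hi N e ↦ ?_
    obtain _ | i := i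
    · lia
    have := (subsingleton_extGroup_succ_iff M N i).mp (h N _ hi)
    exact Subsingleton.elim _ _
  · rintro h N (_ | i) hi
    · lia
    exact (subsingleton_extGroup_succ_iff M N i).mpr (h.subsingleton _ _ _ hi N)

lemma injDimLE_iff {M : ModuleCat.{u} R} : InjDimLE R n M ↔ HasInjectiveDimensionLE M n := by
  constructor
  · refine fun h ↦ HasInjectiveDimensionLT.mk fun i hi N e ↦ ?_
    obtain _ | i := i
    · lia
    have := (subsingleton_extGroup_succ_iff N M i).mp (h N _ hi)
    exact Subsingleton.elim _ _
  · rintro h N (_ | i) hi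
    · lia
    exact (subsingleton_extGroup_succ_iff N M i).mpr (h.subsingleton _ _ _ hi N)

variable {P : Type u} [AddCommGroup P] [Module R P]

lemma projDimLE_zero_iff : ProjDimLE R 0 (ModuleCat.of R P) ↔ Module.Projective R P := by
  rw [projDimLE_iff, ← projective_iff_hasProjectiveDimensionLE_zero, IsProjective.iff_projective]

lemma projDimLE_submodule_of_quotient [Module.Projective R P] (K : Submodule R P)
    (h : ProjDimLE R (n + 1) (ModuleCat.of R (P ⧸ K))) : ProjDimLE R n (ModuleCat.of R K) := by
  rw [projDimLE_iff] at h ⊢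
  have quotient : (ShortComplex.mk (ModuleCat.ofHom K.subtype) (ModuleCat.ofHom K.mkQ)
      (by ext; simp)).ShortExact :=
    ModuleCat.shortComplex_shortExact _ (LinearMap.exact_subtype_mkQ K)
      K.injective_subtype K.mkQ_surjective
  exact (quotient.hasProjectiveDimensionLT_X₃_iff n inferInstance).mp h

end Module

theorem radical_projective_or_top_infinite_dims_general (R : Type u) [Ring R] (n : ℕ)
    (hproj : ∀ Q : ModuleCat.{u} R, Projective Q → InjDimLE R (n + 1) Q)
    (hinj : ∀ I : ModuleCat.{u} R, Injective I → ProjDimLE R (n + 1) I)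
    (P : Type u) [AddCommGroup P] [Module R P] [Module.Projective R P] (K : Submodule R P) :
    ProjDimLE R n (ModuleCat.of R K) ∨
      ((¬ ∃ m : ℕ, ProjDimLE R m (ModuleCat.of R (P ⧸ K))) ∧
        (¬ ∃ m : ℕ, InjDimLE R m (ModuleCat.of R (P ⧸ K)))) := by
  simp only [projDimLE_iff, injDimLE_iff] at hproj hinj
  refine or_iff_not_imp_left.mpr fun hK ↦ ⟨?_, ?_⟩
  · rintro ⟨m, hm⟩
    exact hK (projDimLE_submodule_of_quotient K (projDimLE_iff.mpr
      (hasProjectiveDimensionLT_of_forall_projective hproj (projDimLE_iff.mp hm))))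
  · rintro ⟨m, hm⟩
    exact hK (projDimLE_submodule_of_quotient K (projDimLE_iff.mpr
      (hasProjectiveDimensionLT_of_forall_injective hinj (injDimLE_iff.mp hm))))

/-- Let `R` be a ring such that every projective left `R`-module has injective dimension
at most 1 and every injective left `R`-module has projective dimension at most 1
(Gorenstein of Gorenstein dimension at most 1), let `J` be the Jacobson radical of `R`
and `P` a projective left `R`-module. Then either `J • P` is projective, or `P / J•P`
has infinite projective dimension and infinite injective dimension. -/
theorem radical_projective_or_top_infinite_dims (R : Type u) [Ring R]
    (hproj : ∀ P : ModuleCat.{u} R, Projective P → InjDimLE R 1 P)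
    (hinj : ∀ I : ModuleCat.{u} R, Injective I → ProjDimLE R 1 I)
    (P : Type u) [AddCommGroup P] [Module R P] (hP : Module.Projective R P) :
    Module.Projective R (radSMul R P) ∨
      ((¬ ∃ m : ℕ, ProjDimLE R m (ModuleCat.of R (P ⧸ radSMul R P))) ∧
        (¬ ∃ m : ℕ, InjDimLE R m (ModuleCat.of R (P ⧸ radSMul R P)))) := by
  rw [← projDimLE_zero_iff]
  exact radical_projective_or_top_infinite_dims_general R 0 hproj hinj P (radSMul R P)
end

section
/- Let R be a ring such that Ext^3_R(X,Y) = 0 for all left R-modules X and Y, and such that Ext^2_R(I,P) = 0 for every injective left R-module I and every projective left R-module P. Then Ext^2_R(X,Y) = 0 for all left R-modules X and Y. (This is the argument showing that for a tilted algebra B, which has global dimension at most 2, the vanishing of Ext^2_B(DB,B) implies the vanishing of Ext^2_B(X,Y) for all B-modules X, Y.) -/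
open CategoryTheory

universe u

/-!
The vanishing of `Ext^(n+1)` makes `Ext^n` right exact in each variable. If `0 → X → I → Z → 0` is
exact with `I` injective and `P` is projective, then `Ext^n(X, P)` sits between `Ext^n(I, P) = 0`
and `Ext^(n+1)(Z, P) = 0`. If `0 → K → P → Y → 0` is exact with `P` projective, then `Ext^n(X, Y)`
sits between `Ext^n(X, P)`, which has just been shown to vanish, and `Ext^(n+1)(X, K) = 0`.

Mathlib has these long exact sequences for `Abelian.Ext`, defined by the derived category, and not
for the derived functor `Ext`. Over a projective resolution `P` of `X`, both groups vanish in
positive degree exactly when every cocycle of `Hom(P, Y)` is a coboundary.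
-/

universe w v

variable {C : Type u} [Category.{v} C] [Abelian C]

section Comparison

variable {X : C} (Y : C) (n : ℕ)

lemma subsingleton_derivedExt_succ_iff_cocycles_are_coboundaries
    (k : Type*) [Ring k] [Linear k C] [EnoughProjectives C] (P : ProjectiveResolution X) :
    Subsingleton (((Ext k C (n + 1)).obj (Opposite.op X)).obj Y) ↔
      ∀ f : P.complex.X (n + 1) ⟶ Y, P.complex.d (n + 2) (n + 1) ≫ f = 0 →
        ∃ g : P.complex.X n ⟶ Y, P.complex.d (n + 1) n ≫ g = f := by
  rw [← ModuleCat.isZero_iff_subsingleton, (P.isoExt (n + 1) Y).isZero_iff,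
    ← HomologicalComplex.exactAt_iff_isZero_homology,
    HomologicalComplex.exactAt_iff' _ n (n + 1) (n + 2) (by simp) (by simp),
    ShortComplex.moduleCat_exact_iff]
  rfl

lemma subsingleton_abelianExt_succ_iff_cocycles_are_coboundaries
    [HasExt.{w} C] (P : ProjectiveResolution X) :
    Subsingleton (Abelian.Ext.{w} X Y (n + 1)) ↔
      ∀ f : P.complex.X (n + 1) ⟶ Y, P.complex.d (n + 2) (n + 1) ≫ f = 0 →
        ∃ g : P.complex.X n ⟶ Y, P.complex.d (n + 1) n ≫ g = f := by
  constructor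
  · intro _ f hf
    exact (P.extMk_eq_zero_iff f (n + 2) rfl hf n rfl).1 (Subsingleton.elim _ _)
  · intro h
    refine subsingleton_of_forall_eq 0 fun a ↦ ?_
    obtain ⟨f, hf, rfl⟩ := P.extMk_surjective a (n + 2) rfl
    exact (P.extMk_eq_zero_iff f (n + 2) rfl hf n rfl).2 (h f hf)

lemma subsingleton_derivedExt_succ_iff_abelianExt
    (k : Type*) [Ring k] [Linear k C] [EnoughProjectives C] [HasExt.{w} C] (X : C) :
    Subsingleton (((Ext k C (n + 1)).obj (Opposite.op X)).obj Y) ↔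
      Subsingleton (Abelian.Ext.{w} X Y (n + 1)) :=
  (subsingleton_derivedExt_succ_iff_cocycles_are_coboundaries Y n k (projectiveResolution X)).trans
    (subsingleton_abelianExt_succ_iff_cocycles_are_coboundaries Y n (projectiveResolution X)).symm

end Comparison

section DimensionShifting

variable [HasExt.{w} C] {n : ℕ}

lemma subsingleton_ext_X₁_of_shortExact {S : ShortComplex C} (hS : S.ShortExact) (Y : C)
    [Subsingleton (Abelian.Ext.{w} S.X₂ Y n)] [Subsingleton (Abelian.Ext.{w} S.X₃ Y (n + 1))] :
    Subsingleton (Abelian.Ext.{w} S.X₁ Y n) := by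
  refine subsingleton_of_forall_eq 0 fun a ↦ ?_
  obtain ⟨b, rfl⟩ :=
    Abelian.Ext.contravariant_sequence_exact₁ hS Y a (Nat.add_comm 1 n) (Subsingleton.elim _ _)
  rw [Subsingleton.elim b 0, Abelian.Ext.comp_zero]

lemma subsingleton_ext_X₃_of_shortExact {S : ShortComplex C} (hS : S.ShortExact) (X : C)
    [Subsingleton (Abelian.Ext.{w} X S.X₂ n)] [Subsingleton (Abelian.Ext.{w} X S.X₁ (n + 1))] :
    Subsingleton (Abelian.Ext.{w} X S.X₃ n) := by
  refine subsingleton_of_forall_eq 0 fun a ↦ ?_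
  obtain ⟨b, rfl⟩ :=
    Abelian.Ext.covariant_sequence_exact₃ X hS a rfl (Subsingleton.elim _ _)
  rw [Subsingleton.elim b 0, Abelian.Ext.zero_comp]

lemma subsingleton_ext_of_forall_injective [EnoughInjectives C] {Y : C}
    (h_succ : ∀ X : C, Subsingleton (Abelian.Ext.{w} X Y (n + 1)))
    (h_inj : ∀ I : C, Injective I → Subsingleton (Abelian.Ext.{w} I Y n)) (X : C) :
    Subsingleton (Abelian.Ext.{w} X Y n) := by
  obtain ⟨I⟩ := EnoughInjectives.presentation X
  have : Subsingleton (Abelian.Ext.{w} I.shortComplex.X₂ Y n) := h_inj I.J I.injective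
  exact subsingleton_ext_X₁_of_shortExact I.shortExact_shortComplex Y

lemma subsingleton_ext_of_forall_projective [EnoughProjectives C] {X : C}
    (h_succ : ∀ Y : C, Subsingleton (Abelian.Ext.{w} X Y (n + 1)))
    (h_proj : ∀ P : C, Projective P → Subsingleton (Abelian.Ext.{w} X P n)) (Y : C) :
    Subsingleton (Abelian.Ext.{w} X Y n) := by
  let S := ShortComplex.mk _ _ (Limits.kernel.condition (Projective.π Y))
  have hS : S.ShortExact := { exact := ShortComplex.exact_kernel _ }
  have : Subsingleton (Abelian.Ext.{w} X S.X₂ n) := h_proj (Projective.over Y) inferInstance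
  exact subsingleton_ext_X₃_of_shortExact hS X

theorem ext_two_vanishes_general [EnoughInjectives C] [EnoughProjectives C]
    (h_succ : ∀ X Y : C, Subsingleton (Abelian.Ext.{w} X Y (n + 1)))
    (h_inj_proj : ∀ I P : C, Injective I → Projective P → Subsingleton (Abelian.Ext.{w} I P n))
    (X Y : C) : Subsingleton (Abelian.Ext.{w} X Y n) :=
  subsingleton_ext_of_forall_projective (h_succ X) (fun P hP ↦
    subsingleton_ext_of_forall_injective (h_succ · P) (h_inj_proj · P · hP) X) Y

end DimensionShifting

/-- If `Ext^3_R(X, Y) = 0` for all left `R`-modules `X`, `Y`, and `Ext^2_R(I, P) = 0`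
for every injective `I` and every projective `P`, then `Ext^2_R(X, Y) = 0` for all
left `R`-modules `X`, `Y`. -/
theorem ext_two_vanishes (R : Type u) [Ring R]
    (h3 : ∀ X Y : ModuleCat.{u} R, Subsingleton (ExtGroup R X Y 3))
    (h2 : ∀ I P : ModuleCat.{u} R, Injective I → Projective P →
      Subsingleton (ExtGroup R I P 2)) :
    ∀ X Y : ModuleCat.{u} R, Subsingleton (ExtGroup R X Y 2) := by
  simp only [ExtGroup, subsingleton_derivedExt_succ_iff_abelianExt] at h3 h2 ⊢
  exact ext_two_vanishes_general h3 h2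
end
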